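/- arXiv:2002.01298 — 11 statements merged into one kernel-verified Lean document; each statement's English description precedes it below -/
import Mathlib

section
/- For every positive integer r, every real a > 0, and every signature s = (s_1,…,s_r), one has Σ_{j=1}^r c'_s(j) = r, where c'_s(j) = ∏_{k≠j, 1≤k≤r} (s_j − s_k + (a/2)(k−j−1))/(s_j − s_k + (a/2)(k−j)). (First half of Lemma 3.3.) -/
open Finset

/-- The coefficient `c'_s(j)` from Lemma 3.3 of the paper:
`c'_s(j) = ∏_{k≠j} (s_j − s_k + (a/2)(k−j−1))/(s_j − s_k + (a/2)(k−j))`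
(indices are zero-based, which does not change the differences `k − j`). -/
noncomputable def cPrime {r : ℕ} (a : ℝ) (s : Fin r → ℕ) (j : Fin r) : ℝ :=
  ∏ k ∈ Finset.univ.erase j,
    (((s j : ℝ) - (s k : ℝ) + (a / 2) * (((k : ℕ) : ℝ) - ((j : ℕ) : ℝ) - 1)) /
      ((s j : ℝ) - (s k : ℝ) + (a / 2) * (((k : ℕ) : ℝ) - ((j : ℕ) : ℝ))))

open Polynomial in
/-- The identity `∑_j ∏_{k≠j} (x_j - x_k - h)/(x_j - x_k) = r`, by Lagrange interpolation of
`∏ (X - x_k) - ∏ (X - x_k - h)`. -/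
theorem sum_prod_sub_div (r : ℕ) (hr : 0 < r) (h : ℝ) (hh : h ≠ 0) (x : Fin r → ℝ)
    (hx : Function.Injective x) :
    ∑ j : Fin r, ∏ k ∈ Finset.univ.erase j, ((x j - x k - h) / (x j - x k)) = r := by
  set P : ℝ[X] := ∏ k : Fin r, (X - C (x k)) - ∏ k : Fin r, (X - C (x k + h)) with hP
  have hm : ∀ y : Fin r → ℝ, (∏ k : Fin r, (X - C (y k))).Monic := fun y =>
    monic_prod_of_monic _ _ fun k _ => monic_X_sub_C _
  have hd : ∀ y : Fin r → ℝ, (∏ k : Fin r, (X - C (y k))).degree = (r : WithBot ℕ) := fun y => by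
    simp [degree_prod]
  have hdeg : P.degree < (r : WithBot ℕ) := by
    rw [← hd x]
    exact degree_sub_lt_left ((hd x).trans (hd _).symm) (hm x).ne_zero ((hm x).trans (hm _).symm)
  have hc : P.coeff (r - 1) = r * h := by
    have key : ∀ y : Fin r → ℝ, (∏ k : Fin r, (X - C (y k))).coeff (r - 1) = -∑ k, y k := by
      intro y
      have := prod_X_sub_C_coeff_card_pred (Finset.univ : Finset (Fin r)) y (by simpa using hr)
      simpa using this
    rw [hP, coeff_sub, key, key]
    simp [Finset.sum_add_distrib]
  have hev : ∀ j, P.eval (x j) = h * ∏ k ∈ Finset.univ.erase j, (x j - x k - h) := by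
    intro j
    rw [hP, eval_sub, eval_prod, eval_prod,
      Finset.prod_eq_zero (Finset.mem_univ j) (by simp),
      ← Finset.mul_prod_erase _ _ (Finset.mem_univ j)]
    simp [sub_sub]
  have := Lagrange.coeff_eq_sum (s := (Finset.univ : Finset (Fin r))) (v := x) hx.injOn (P := P)
    (by simpa using hdeg)
  simp only [Finset.card_univ, Fintype.card_fin] at this
  rw [hc] at this
  apply mul_left_cancel₀ hh
  rw [mul_comm h (r : ℝ), this, Finset.mul_sum]
  refine Finset.sum_congr rfl fun j _ => ?_
  rw [hev, Finset.prod_div_distrib, mul_div_assoc]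

/-- First half of Lemma 3.3: for every signature `s` (an antitone `r`-tuple of
nonnegative integers), `Σ_{j=1}^r c'_s(j) = r`. -/
theorem sum_cPrime_eq_rank (r : ℕ) (hr : 0 < r) (a : ℝ) (ha : 0 < a)
    (s : Fin r → ℕ) (hs : Antitone s) :
    ∑ j : Fin r, cPrime a s j = r := by
  have hh : a / 2 ≠ 0 := by positivity
  have hanti : StrictAnti (fun j : Fin r => (s j : ℝ) - (a / 2) * ((j : ℕ) : ℝ)) := by
    intro i j hij
    have h1 : (s j : ℝ) ≤ s i := by exact_mod_cast hs hij.le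
    have h2 : ((i : ℕ) : ℝ) < ((j : ℕ) : ℝ) := by exact_mod_cast hij
    have h3 : (a / 2) * ((i : ℕ) : ℝ) < (a / 2) * ((j : ℕ) : ℝ) := by gcongr
    simp only
    linarith
  rw [← sum_prod_sub_div r hr (a / 2) hh _ hanti.injective]
  refine Finset.sum_congr rfl fun j _ => ?_
  unfold cPrime
  refine Finset.prod_congr rfl fun k _ => ?_
  congr 1 <;> ring
end

section
/- For every positive integer r, every real a > 0, and every signature s = (s_1,…,s_r), one has Σ_{j=1}^r c_s(j) = r, where c_s(j) = ∏_{k≠j, 1≤k≤r} (s_j − s_k + (a/2)(k−j+1))/(s_j − s_k + (a/2)(k−j)). (Second half of Lemma 3.3.) -/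
open Finset

/-- The coefficient `c_s(j)` from Lemma 3.3 of the paper:
`c_s(j) = ∏_{k≠j} (s_j − s_k + (a/2)(k−j+1))/(s_j − s_k + (a/2)(k−j))`
(indices are zero-based, which does not change the differences `k − j`). -/
noncomputable def cFun {r : ℕ} (a : ℝ) (s : Fin r → ℕ) (j : Fin r) : ℝ :=
  ∏ k ∈ Finset.univ.erase j,
    (((s j : ℝ) - (s k : ℝ) + (a / 2) * (((k : ℕ) : ℝ) - ((j : ℕ) : ℝ) + 1)) /
      ((s j : ℝ) - (s k : ℝ) + (a / 2) * (((k : ℕ) : ℝ) - ((j : ℕ) : ℝ))))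

theorem aux_sum (r : ℕ) (hr : 0 < r) (h : ℝ) (hh : h ≠ 0) (x : Fin r → ℝ)
    (hx : Function.Injective x) :
    ∑ j : Fin r, ∏ k ∈ Finset.univ.erase j, ((x j - x k + h) / (x j - x k)) = r := by
  let P : Polynomial ℝ := Lagrange.nodal univ (fun k => x k - h)
  let Q : Polynomial ℝ := Lagrange.nodal univ x
  have hP : P.degree = r := by simp [P, Lagrange.degree_nodal]
  have hQ : Q.degree = r := by simp [Q, Lagrange.degree_nodal]
  have hPm : P.Monic := Lagrange.nodal_monic
  have hQm : Q.Monic := Lagrange.nodal_monic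
  have hd : (P - Q).degree < (r : WithBot ℕ) := by
    have := Polynomial.degree_sub_lt_left (hP.trans hQ.symm) hPm.ne_zero (hPm.trans hQm.symm)
    rwa [hP] at this
  have hc : (P - Q).coeff (r - 1) = r * h := by
    have h1 := Polynomial.prod_X_sub_C_coeff_card_pred (univ : Finset (Fin r))
      (fun k => x k - h) (by simpa using hr)
    have h2 := Polynomial.prod_X_sub_C_coeff_card_pred (univ : Finset (Fin r)) x
      (by simpa using hr)
    simp only [card_univ, Fintype.card_fin] at h1 h2
    rw [Polynomial.coeff_sub]
    simp only [P, Q, Lagrange.nodal_eq]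
    rw [h1, h2]
    simp [Finset.sum_sub_distrib]
  have key := Lagrange.coeff_eq_sum (s := univ) (v := x) hx.injOn (P := P - Q)
    (by simpa using hd)
  simp only [card_univ, Fintype.card_fin] at key
  rw [hc] at key
  have : (r : ℝ) = ∑ j : Fin r, (P - Q).eval (x j) / (∏ k ∈ univ.erase j, (x j - x k)) / h := by
    rw [← Finset.sum_div, ← key]; field_simp
  rw [this]
  refine Finset.sum_congr rfl fun j _ => ?_
  rw [Finset.prod_div_distrib, Polynomial.eval_sub, Lagrange.eval_nodal_at_node (mem_univ j),
    Lagrange.eval_nodal, ← Finset.mul_prod_erase univ _ (mem_univ j)]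
  simp only [sub_sub_cancel, sub_zero]
  rw [mul_div_assoc, mul_div_cancel_left₀ _ hh]
  simp only [sub_sub_eq_add_sub, sub_add_eq_add_sub]

/-- Second half of Lemma 3.3: for every signature `s` (an antitone `r`-tuple of
nonnegative integers), `Σ_{j=1}^r c_s(j) = r`. -/
theorem sum_cFun_eq_rank (r : ℕ) (hr : 0 < r) (a : ℝ) (ha : 0 < a)
    (s : Fin r → ℕ) (hs : Antitone s) :
    ∑ j : Fin r, cFun a s j = r := by
  have hx : StrictAnti (fun j : Fin r => (s j : ℝ) - a / 2 * ((j : ℕ) : ℝ)) := by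
    intro i j hij
    have h1 : (s j : ℝ) ≤ s i := by exact_mod_cast hs hij.le
    have h2 : ((i : ℕ) : ℝ) < ((j : ℕ) : ℝ) := by exact_mod_cast hij
    have h3 := mul_lt_mul_of_pos_left h2 (half_pos ha)
    simp only
    linarith
  rw [← aux_sum r hr (a / 2) (half_pos ha).ne' _ hx.injective]
  refine Finset.sum_congr rfl fun j _ => ?_
  unfold cFun
  refine Finset.prod_congr rfl fun k _ => ?_
  congr 1 <;> ring
end

section
/- Let r be a positive integer and let x_1, …, x_r be pairwise distinct real numbers. Then Σ_{j=1}^r ∏_{k≠j, 1≤k≤r} (1 − 1/(x_j − x_k)) = r. (This is the identity established in the proof of Lemma 3.3 after the substitution x_j = (s_j − (a/2)j)/(a/2).) -/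
open Finset

open Polynomial in
/-- The identity in the proof of Lemma 3.3: for pairwise distinct reals
`x_1, …, x_r`, `Σ_{j=1}^r ∏_{k≠j} (1 − 1/(x_j − x_k)) = r`. -/
theorem sum_prod_one_sub_inv_sub_eq_card (r : ℕ) (hr : 0 < r)
    (x : Fin r → ℝ) (hx : Function.Injective x) :
    ∑ j : Fin r, ∏ k ∈ Finset.univ.erase j, (1 - 1 / (x j - x k)) = r := by
  let A : ℝ[X] := ∏ k : Fin r, (X - C (x k))
  let B : ℝ[X] := ∏ k : Fin r, (X - C (x k + 1))
  have hA : A.Monic := monic_prod_of_monic _ _ fun i _ => monic_X_sub_C _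
  have hB : B.Monic := monic_prod_of_monic _ _ fun i _ => monic_X_sub_C _
  have dA : A.degree = r := by simp [A, degree_prod]
  have dB : B.degree = r := by simp only [B, degree_prod, degree_X_sub_C]; simp
  have hdeg : (A - B).degree < r := by
    rw [← dA]
    exact degree_sub_lt_left (dA.trans dB.symm) hA.ne_zero (by rw [hA.leadingCoeff, hB.leadingCoeff])
  have cA : A.coeff (r - 1) = - ∑ k, x k := by
    simpa using prod_X_sub_C_coeff_card_pred (Finset.univ : Finset (Fin r)) x (by simpa using hr)
  have cB : B.coeff (r - 1) = - ∑ k, (x k + 1) := by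
    have h := prod_X_sub_C_coeff_card_pred (Finset.univ : Finset (Fin r)) (fun k => x k + 1)
      (by simpa using hr)
    rwa [Finset.card_univ, Fintype.card_fin] at h
  have hc : (A - B).coeff (r - 1) = r := by
    rw [coeff_sub, cA, cB, Finset.sum_add_distrib]; simp
  rw [← hc]
  have h2 := Lagrange.coeff_eq_sum (s := Finset.univ) (v := x) hx.injOn
    (P := A - B) (by simpa using hdeg)
  simp only [Finset.card_univ, Fintype.card_fin] at h2
  rw [h2]
  refine Finset.sum_congr rfl fun j _ => ?_
  have eA : eval (x j) A = 0 := by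
    simp only [A, eval_prod, eval_sub, eval_X, eval_C]
    exact Finset.prod_eq_zero (Finset.mem_univ j) (sub_self _)
  have eB : eval (x j) B = - ∏ k ∈ Finset.univ.erase j, (x j - (x k + 1)) := by
    simp only [B, eval_prod, eval_sub, eval_X, eval_C]
    rw [← Finset.mul_prod_erase _ _ (Finset.mem_univ j)]
    ring
  rw [eval_sub, eA, eB, zero_sub, neg_neg, ← Finset.prod_div_distrib]
  refine Finset.prod_congr rfl fun k hk => ?_
  have hne : x j - x k ≠ 0 :=
    sub_ne_zero.mpr fun h => (Finset.ne_of_mem_erase hk) (hx h).symm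
  field_simp
  ring
end

section
/- Let r be a positive integer, a > 0 a real number, and s a signature such that s − ε_j is again a signature for some j ∈ {1,…,r}. Then c'_s(j) > 0 and 1/c'_s(j) ≤ (1 + (a/2)(r−1))^r; equivalently c'_s(j) ≥ (1 + (a/2)(r−1))^{−r}. (Inequality (3.2) in the proof of Theorem 3.4.) -/
open Finset

/-- Inequality (3.2) in the proof of Theorem 3.4: if `s` is a signature such that
`s − ε_j` is again a signature, then `c'_s(j) > 0` and
`1/c'_s(j) ≤ (1 + (a/2)(r−1))^r`, equivalently `c'_s(j) ≥ (1 + (a/2)(r−1))^{−r}`. -/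
theorem cPrime_pos_and_inv_le (r : ℕ) (hr : 0 < r) (a : ℝ) (ha : 0 < a)
    (s : Fin r → ℕ) (hs : Antitone s) (j : Fin r)
    (hj1 : 1 ≤ s j) (hj2 : Antitone (Function.update s j (s j - 1))) :
    0 < cPrime a s j ∧
      1 / cPrime a s j ≤ (1 + (a / 2) * ((r : ℝ) - 1)) ^ r ∧
      ((1 + (a / 2) * ((r : ℝ) - 1)) ^ r)⁻¹ ≤ cPrime a s j := by
  set B : ℝ := 1 + (a / 2) * ((r : ℝ) - 1) with hB
  have hr1 : (1 : ℝ) ≤ r := by exact_mod_cast hr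
  have hB1 : 1 ≤ B := by
    have : 0 ≤ (a / 2) * ((r : ℝ) - 1) := mul_nonneg (by linarith) (by linarith)
    linarith
  have hB0 : 0 < B := by linarith
  have key : ∀ k ∈ Finset.univ.erase j, B⁻¹ ≤
      (((s j : ℝ) - (s k : ℝ) + (a / 2) * (((k : ℕ) : ℝ) - ((j : ℕ) : ℝ) - 1)) /
      ((s j : ℝ) - (s k : ℝ) + (a / 2) * (((k : ℕ) : ℝ) - ((j : ℕ) : ℝ)))) := by
    intro k hk
    have hkj : k ≠ j := Finset.ne_of_mem_erase hk
    rcases lt_or_gt_of_ne hkj with h | h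
    · have h1 : (s j : ℝ) ≤ s k := by exact_mod_cast hs h.le
      have h2 : ((k : ℕ) : ℝ) + 1 ≤ ((j : ℕ) : ℝ) := by
        exact_mod_cast (show (k : ℕ) + 1 ≤ j from h)
      have h3 : (s j : ℝ) - (s k : ℝ) + (a / 2) * (((k : ℕ) : ℝ) - ((j : ℕ) : ℝ)) < 0 := by
        nlinarith
      refine le_trans (inv_le_one_of_one_le₀ hB1) ?_
      rw [one_le_div_of_neg h3]
      nlinarith
    · have h1 : (s k : ℝ) + 1 ≤ s j := by
        have := hj2 h.le
        rw [Function.update_self, Function.update_of_ne hkj] at this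
        exact_mod_cast (show s k + 1 ≤ s j by omega)
      have h2 : ((j : ℕ) : ℝ) + 1 ≤ ((k : ℕ) : ℝ) := by
        exact_mod_cast (show (j : ℕ) + 1 ≤ k from h)
      have h4 : (2 : ℝ) ≤ r := by
        have h5 : (j : ℕ) < k := h
        have := k.isLt
        exact_mod_cast (show 2 ≤ r by omega)
      have hBa : 1 + a / 2 ≤ B := by nlinarith
      have hm : 0 ≤ (a / 2) * (((k : ℕ) : ℝ) - ((j : ℕ) : ℝ) - 1) :=
        mul_nonneg (by linarith) (by linarith)
      have hN : 1 ≤ (s j : ℝ) - (s k : ℝ) +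
          (a / 2) * (((k : ℕ) : ℝ) - ((j : ℕ) : ℝ) - 1) := by linarith
      rw [inv_eq_one_div, div_le_div_iff₀ hB0 (by linarith)]
      have := mul_le_mul_of_nonneg_left hBa (by linarith : 0 ≤ (s j : ℝ) - (s k : ℝ) +
          (a / 2) * (((k : ℕ) : ℝ) - ((j : ℕ) : ℝ) - 1))
      nlinarith
  have hlow : (B ^ r)⁻¹ ≤ cPrime a s j := by
    have h := Finset.prod_le_prod (fun k _ => (inv_pos.2 hB0).le) key
    rw [Finset.prod_const] at h
    refine le_trans ?_ h
    rw [← inv_pow]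
    refine pow_le_pow_of_le_one (inv_pos.2 hB0).le (inv_le_one_of_one_le₀ hB1) ?_
    exact (Finset.card_le_univ _).trans (by simp)
  have hpos : 0 < cPrime a s j := lt_of_lt_of_le (by positivity) hlow
  refine ⟨hpos, ?_, hlow⟩
  rw [one_div]
  exact inv_le_of_inv_le₀ (by positivity) hlow
end

section
/- With the notation of the context, the following are equivalent: (i) sup{ τ(s) : s a nonzero signature } < ∞; (ii) A := sup{ (a_{s−ε_j}/a_s)·(p − (a/2)(j−1) + s_j − 1) : s a signature, j ∈ {1,…,r}, s − ε_j a signature } < ∞. (This is the analytic content of Theorem 3.4: the multiplication d-tuple on the Hilbert space H^{(a)} is bounded if and only if A is finite.) -/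
open Finset
open scoped Classical

/-- `SigSub s j` says that `s − ε_j` is again a signature: `s j ≥ 1` and the tuple
obtained from `s` by decreasing the `j`-th entry by one is still antitone. -/
def SigSub {r : ℕ} (s : Fin r → ℕ) (j : Fin r) : Prop :=
  1 ≤ s j ∧ Antitone (Function.update s j (s j - 1))

/-- The eigenvalue `τ(s)` of `Σ_i M_i M_i^*` on the Peter–Weyl component `P_s`,
for the Hilbert space `H^{(a)}` with weights `w s = a_s`; here
`p = 1 + (a/2)(r−1) + b` plays the role of `d/r`.  The sum extends over those `j`
for which `s − ε_j` is a signature (the other terms vanish). -/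
noncomputable def tau {r : ℕ} (a b : ℝ) (w : (Fin r → ℕ) → ℝ) (s : Fin r → ℕ) : ℝ :=
  ∑ j ∈ Finset.univ.filter (fun j : Fin r => SigSub s j),
    (w (Function.update s j (s j - 1)) / w s) *
      ((1 + (a / 2) * ((r : ℝ) - 1) + b) - (a / 2) * ((j : ℕ) : ℝ) + (s j : ℝ) - 1) *
      (((a / 2) * ((r : ℝ) - 1 - ((j : ℕ) : ℝ)) + (s j : ℝ)) /
        (b + (a / 2) * ((r : ℝ) - 1 - ((j : ℕ) : ℝ)) + (s j : ℝ))) *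
      cPrime a s j

lemma cP_factor {r : ℕ} (a : ℝ) (ha : 0 < a) (s : Fin r → ℕ) (hs : Antitone s) (j k : Fin r)
    (h : SigSub s j) (hk : k ≠ j) :
    1 / (1 + a / 2) ≤ (((s j : ℝ) - (s k : ℝ) + (a / 2) * (((k : ℕ) : ℝ) - ((j : ℕ) : ℝ) - 1)) /
      ((s j : ℝ) - (s k : ℝ) + (a / 2) * (((k : ℕ) : ℝ) - ((j : ℕ) : ℝ)))) ∧
    (((s j : ℝ) - (s k : ℝ) + (a / 2) * (((k : ℕ) : ℝ) - ((j : ℕ) : ℝ) - 1)) /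
      ((s j : ℝ) - (s k : ℝ) + (a / 2) * (((k : ℕ) : ℝ) - ((j : ℕ) : ℝ)))) ≤ 2 := by
  rcases lt_or_gt_of_ne hk with hlt | hgt
  · have h1 : s j ≤ s k := hs hlt.le
    have h1' : (s j : ℝ) ≤ s k := by exact_mod_cast h1
    have h2 : (k : ℕ) + 1 ≤ (j : ℕ) := hlt
    have h2' : ((k : ℕ) : ℝ) + 1 ≤ ((j : ℕ) : ℝ) := by exact_mod_cast h2
    obtain ⟨y, hy⟩ : ∃ y : ℝ, y = (s k : ℝ) - s j + (a / 2) * (((j : ℕ) : ℝ) - ((k : ℕ) : ℝ)) :=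
      ⟨_, rfl⟩
    have hya : a / 2 ≤ y := by rw [hy]; nlinarith
    have e : (((s j : ℝ) - (s k : ℝ) + (a / 2) * (((k : ℕ) : ℝ) - ((j : ℕ) : ℝ) - 1)) /
      ((s j : ℝ) - (s k : ℝ) + (a / 2) * (((k : ℕ) : ℝ) - ((j : ℕ) : ℝ)))) = (y + a / 2) / y := by
      rw [← neg_div_neg_eq]
      congr 1 <;> rw [hy] <;> ring
    rw [e]
    have hy0 : 0 < y := by linarith
    constructor
    · rw [div_le_div_iff₀ (by linarith) hy0]
      nlinarith [mul_pos ha hy0]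
    · rw [div_le_iff₀ hy0]; linarith
  · have h1 : s k + 1 ≤ s j := by
      have := h.2 hgt.le
      rw [Function.update_self, Function.update_of_ne hk] at this
      have := h.1
      omega
    have h1' : (s k : ℝ) + 1 ≤ s j := by exact_mod_cast h1
    have h2 : (j : ℕ) + 1 ≤ (k : ℕ) := hgt
    have h2' : ((j : ℕ) : ℝ) + 1 ≤ ((k : ℕ) : ℝ) := by exact_mod_cast h2
    obtain ⟨x, hx⟩ : ∃ x : ℝ, x = (s j : ℝ) - (s k : ℝ) +
      (a / 2) * (((k : ℕ) : ℝ) - ((j : ℕ) : ℝ) - 1) := ⟨_, rfl⟩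
    have hx1 : 1 ≤ x := by rw [hx]; nlinarith
    have e : (s j : ℝ) - (s k : ℝ) + (a / 2) * (((k : ℕ) : ℝ) - ((j : ℕ) : ℝ)) = x + a / 2 := by
      rw [hx]; ring
    rw [← hx, e]
    constructor
    · rw [div_le_div_iff₀ (by linarith) (by linarith)]
      nlinarith
    · rw [div_le_iff₀ (by linarith)]; linarith

lemma cP_bounds {r : ℕ} (a : ℝ) (ha : 0 < a) (s : Fin r → ℕ) (hs : Antitone s) (j : Fin r)
    (h : SigSub s j) :
    (1 / (1 + a / 2)) ^ (r - 1) ≤ cPrime a s j ∧ cPrime a s j ≤ 2 ^ (r - 1) := by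
  have hc : (Finset.univ.erase j).card = r - 1 := by
    rw [Finset.card_erase_of_mem (Finset.mem_univ j), Finset.card_univ, Fintype.card_fin]
  have h0 : 0 < 1 / (1 + a / 2) := by positivity
  unfold cPrime
  rw [← hc, ← Finset.prod_const, ← Finset.prod_const]
  constructor
  · refine Finset.prod_le_prod (fun _ _ => h0.le) fun k hk => ?_
    exact (cP_factor a ha s hs j k h (Finset.ne_of_mem_erase hk)).1
  · refine Finset.prod_le_prod (fun k hk => ?_) fun k hk => ?_
    · exact h0.le.trans (cP_factor a ha s hs j k h (Finset.ne_of_mem_erase hk)).1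
    · exact (cP_factor a ha s hs j k h (Finset.ne_of_mem_erase hk)).2

lemma ratio_bounds {r : ℕ} (a b : ℝ) (ha : 0 < a) (hb : 0 ≤ b) (s : Fin r → ℕ) (j : Fin r)
    (h : SigSub s j) :
    1 / (1 + b) ≤ (((a / 2) * ((r : ℝ) - 1 - ((j : ℕ) : ℝ)) + (s j : ℝ)) /
        (b + (a / 2) * ((r : ℝ) - 1 - ((j : ℕ) : ℝ)) + (s j : ℝ))) ∧
    (((a / 2) * ((r : ℝ) - 1 - ((j : ℕ) : ℝ)) + (s j : ℝ)) /
        (b + (a / 2) * ((r : ℝ) - 1 - ((j : ℕ) : ℝ)) + (s j : ℝ))) ≤ 1 := by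
  have h1 : (1 : ℝ) ≤ s j := by exact_mod_cast h.1
  have h2 : ((j : ℕ) : ℝ) + 1 ≤ r := by exact_mod_cast j.2
  obtain ⟨x, hx⟩ : ∃ x : ℝ, x = (a / 2) * ((r : ℝ) - 1 - ((j : ℕ) : ℝ)) + (s j : ℝ) := ⟨_, rfl⟩
  have hx1 : 1 ≤ x := by rw [hx]; nlinarith
  rw [add_assoc, ← hx]
  constructor
  · rw [div_le_div_iff₀ (by linarith) (by linarith)]
    nlinarith
  · rw [div_le_iff₀ (by linarith)]; linarith

lemma main_nonneg {r : ℕ} (a b : ℝ) (ha : 0 < a) (hb : 0 ≤ b)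
    (w : (Fin r → ℕ) → ℝ) (hw : ∀ s : Fin r → ℕ, Antitone s → 0 < w s) (s : Fin r → ℕ)
    (hs : Antitone s) (j : Fin r) (h : SigSub s j) :
    0 ≤ (w (Function.update s j (s j - 1)) / w s) *
          ((1 + (a / 2) * ((r : ℝ) - 1) + b) - (a / 2) * ((j : ℕ) : ℝ) + (s j : ℝ) - 1) := by
  have h1 : (1 : ℝ) ≤ s j := by exact_mod_cast h.1
  have h2 : ((j : ℕ) : ℝ) + 1 ≤ r := by exact_mod_cast j.2
  refine mul_nonneg (div_pos (hw _ h.2) (hw _ hs)).le ?_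
  nlinarith

/-- Theorem 3.4: the multiplication tuple on `H^{(a)}` is bounded
(`sup{τ(s) : s ≠ 0 a signature} < ∞`) if and only if
`A = sup (a_{s−ε_j}/a_s)·(p − (a/2)(j−1) + s_j − 1)` is finite. -/
theorem tau_bddAbove_iff (r : ℕ) (hr : 0 < r) (a b : ℝ) (ha : 0 < a) (hb : 0 ≤ b)
    (w : (Fin r → ℕ) → ℝ) (hw : ∀ s : Fin r → ℕ, Antitone s → 0 < w s) :
    BddAbove {x : ℝ | ∃ s : Fin r → ℕ, Antitone s ∧ s ≠ 0 ∧ x = tau a b w s} ↔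
      BddAbove {x : ℝ | ∃ (s : Fin r → ℕ) (j : Fin r), Antitone s ∧ SigSub s j ∧
        x = (w (Function.update s j (s j - 1)) / w s) *
          ((1 + (a / 2) * ((r : ℝ) - 1) + b) - (a / 2) * ((j : ℕ) : ℝ) + (s j : ℝ) - 1)} := by
  have h0 : 0 < 1 / (1 + a / 2) := by positivity
  have h0b : 0 < 1 / (1 + b) := by positivity
  have hm : 0 < 1 / (1 + b) * (1 / (1 + a / 2)) ^ (r - 1) := by positivity
  constructor
  · rintro ⟨B, hB⟩
    refine ⟨B / (1 / (1 + b) * (1 / (1 + a / 2)) ^ (r - 1)), ?_⟩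
    rintro x ⟨s, j, hs, h, rfl⟩
    have hs0 : s ≠ 0 := by
      rintro rfl
      have := h.1
      simp at this
    have hT : tau a b w s ≤ B := hB ⟨s, hs, hs0, rfl⟩
    rw [le_div_iff₀ hm]
    refine le_trans ?_ hT
    unfold tau
    refine le_trans ?_ (Finset.single_le_sum (fun i hi => ?_)
      (Finset.mem_filter.2 ⟨Finset.mem_univ j, h⟩))
    · rw [mul_assoc _ _ (cPrime a s j)]
      refine mul_le_mul_of_nonneg_left ?_ (main_nonneg a b ha hb w hw s hs j h)
      have hr1 := (ratio_bounds a b ha hb s j h).1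
      exact mul_le_mul hr1 (cP_bounds a ha s hs j h).1 (by positivity) (h0b.le.trans hr1)
    · have h' := (Finset.mem_filter.1 hi).2
      have hp : 0 ≤ (1 / (1 + a / 2)) ^ (r - 1) := by positivity
      exact mul_nonneg (mul_nonneg (main_nonneg a b ha hb w hw s hs i h')
        (h0b.le.trans (ratio_bounds a b ha hb s i h').1))
        (hp.trans (cP_bounds a ha s hs i h').1)
  · rintro ⟨A, hA⟩
    refine ⟨∑ _j : Fin r, max A 0 * 1 * 2 ^ (r - 1), ?_⟩
    rintro x ⟨s, hs, -, rfl⟩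
    unfold tau
    refine le_trans (Finset.sum_le_sum (g := fun _ => max A 0 * 1 * 2 ^ (r - 1)) fun j hj => ?_)
      (Finset.sum_le_sum_of_subset_of_nonneg (Finset.filter_subset _ _) fun _ _ _ => by positivity)
    have h := (Finset.mem_filter.1 hj).2
    have hp : 0 ≤ (1 / (1 + a / 2)) ^ (r - 1) := by positivity
    have hX := hA ⟨s, j, hs, h, rfl⟩
    have hR := ratio_bounds a b ha hb s j h
    have hC := cP_bounds a ha s hs j h
    refine mul_le_mul (mul_le_mul (hX.trans (le_max_left _ _)) hR.2 (h0b.le.trans hR.1)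
      (le_max_right _ _)) hC.2 (hp.trans hC.1) (by positivity)
end

section
/- With the notation of the context, the following are equivalent: (i) inf{ τ(s) : s a nonzero signature } > 0; (ii) B := inf{ Σ, over those j for which s − ε_j is a signature, of (a_{s−ε_j}/a_s)·(p − (a/2)(j−1) + s_j − 1) : s a nonzero signature } > 0. (This is the analytic content of Theorem 3.6: the range of the row operator D_{M^{(a)*}} is closed if and only if B > 0.) -/
open Finset
open scoped Classical

theorem factor_bounds {r : ℕ} (a : ℝ) (ha : 0 < a) (s : Fin r → ℕ) (hs : Antitone s)
    (j : Fin r) (hj : SigSub s j) (k : Fin r) (hk : k ≠ j) :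
    1 / (1 + a / 2) ≤ ((s j : ℝ) - (s k : ℝ) + (a / 2) * (((k : ℕ) : ℝ) - ((j : ℕ) : ℝ) - 1)) /
      ((s j : ℝ) - (s k : ℝ) + (a / 2) * (((k : ℕ) : ℝ) - ((j : ℕ) : ℝ))) ∧
    ((s j : ℝ) - (s k : ℝ) + (a / 2) * (((k : ℕ) : ℝ) - ((j : ℕ) : ℝ) - 1)) /
      ((s j : ℝ) - (s k : ℝ) + (a / 2) * (((k : ℕ) : ℝ) - ((j : ℕ) : ℝ))) ≤ 2 := by
  rcases lt_or_gt_of_ne hk with h | h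
  · have h1 : (s j : ℝ) ≤ s k := by exact_mod_cast hs h.le
    have h2 : ((k : ℕ) : ℝ) + 1 ≤ ((j : ℕ) : ℝ) := by exact_mod_cast h
    have h3 : (s j : ℝ) - (s k : ℝ) + (a / 2) * (((k : ℕ) : ℝ) - ((j : ℕ) : ℝ)) ≤ -(a / 2) := by
      nlinarith
    rw [← neg_div_neg_eq (_ + _)]
    constructor
    · rw [div_le_div_iff₀ (by linarith) (by linarith)]
      nlinarith
    · rw [div_le_iff₀ (by linarith)]
      nlinarith
  · have h1 : (s k : ℝ) + 1 ≤ s j := by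
      have := hj.2 h.le
      rw [Function.update_self, Function.update_of_ne hk] at this
      have h0 := hj.1
      exact_mod_cast (by omega : s k + 1 ≤ s j)
    have h2 : ((j : ℕ) : ℝ) + 1 ≤ ((k : ℕ) : ℝ) := by exact_mod_cast h
    have h3 : 1 + a / 2 ≤ (s j : ℝ) - (s k : ℝ) + (a / 2) * (((k : ℕ) : ℝ) - ((j : ℕ) : ℝ)) := by
      nlinarith
    constructor
    · rw [div_le_div_iff₀ (by linarith) (by linarith)]
      nlinarith
    · rw [div_le_iff₀ (by linarith)]
      nlinarith

theorem cPrime_bounds {r : ℕ} (a : ℝ) (ha : 0 < a) (s : Fin r → ℕ) (hs : Antitone s)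
    (j : Fin r) (hj : SigSub s j) :
    (1 / (1 + a / 2)) ^ (r - 1) ≤ cPrime a s j ∧ cPrime a s j ≤ 2 ^ (r - 1) := by
  have hc : (Finset.univ.erase j).card = r - 1 := by simp
  have hm : 0 < 1 / (1 + a / 2) := by positivity
  unfold cPrime
  rw [← hc, ← Finset.prod_const, ← Finset.prod_const]
  constructor
  · apply Finset.prod_le_prod
    · intro i _
      exact hm.le
    · intro i hi
      exact (factor_bounds a ha s hs j hj i (Finset.ne_of_mem_erase hi)).1
  · apply Finset.prod_le_prod
    · intro i hi
      exact hm.le.trans (factor_bounds a ha s hs j hj i (Finset.ne_of_mem_erase hi)).1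
    · intro i hi
      exact (factor_bounds a ha s hs j hj i (Finset.ne_of_mem_erase hi)).2

theorem term_bounds {r : ℕ} (a b : ℝ) (ha : 0 < a) (hb : 0 ≤ b)
    (w : (Fin r → ℕ) → ℝ) (hw : ∀ s : Fin r → ℕ, Antitone s → 0 < w s)
    (s : Fin r → ℕ) (hs : Antitone s) (j : Fin r) (hj : SigSub s j) (T : ℝ)
    (hT : T = (w (Function.update s j (s j - 1)) / w s) *
      ((1 + (a / 2) * ((r : ℝ) - 1) + b) - (a / 2) * ((j : ℕ) : ℝ) + (s j : ℝ) - 1)) :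
    (1 / (1 + b) * (1 / (1 + a / 2)) ^ (r - 1)) * T ≤
      T * (((a / 2) * ((r : ℝ) - 1 - ((j : ℕ) : ℝ)) + (s j : ℝ)) /
        (b + (a / 2) * ((r : ℝ) - 1 - ((j : ℕ) : ℝ)) + (s j : ℝ))) * cPrime a s j ∧
    T * (((a / 2) * ((r : ℝ) - 1 - ((j : ℕ) : ℝ)) + (s j : ℝ)) /
        (b + (a / 2) * ((r : ℝ) - 1 - ((j : ℕ) : ℝ)) + (s j : ℝ))) * cPrime a s j ≤
      2 ^ (r - 1) * T := by
  obtain ⟨c1, c2⟩ := cPrime_bounds a ha s hs j hj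
  have hsj : (1 : ℝ) ≤ s j := by exact_mod_cast hj.1
  have hjr : ((j : ℕ) : ℝ) + 1 ≤ r := by exact_mod_cast j.2
  have hy0 : 0 ≤ (a / 2) * ((r : ℝ) - 1 - ((j : ℕ) : ℝ)) :=
    mul_nonneg (by linarith) (by linarith)
  have hT0 : 0 ≤ T := by
    rw [hT]
    apply mul_nonneg (div_nonneg (hw _ hj.2).le (hw s hs).le)
    linarith
  have q1 : 1 / (1 + b) ≤ ((a / 2) * ((r : ℝ) - 1 - ((j : ℕ) : ℝ)) + (s j : ℝ)) /
        (b + (a / 2) * ((r : ℝ) - 1 - ((j : ℕ) : ℝ)) + (s j : ℝ)) := by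
    rw [div_le_div_iff₀ (by linarith) (by linarith)]
    nlinarith
  have q2 : ((a / 2) * ((r : ℝ) - 1 - ((j : ℕ) : ℝ)) + (s j : ℝ)) /
        (b + (a / 2) * ((r : ℝ) - 1 - ((j : ℕ) : ℝ)) + (s j : ℝ)) ≤ 1 := by
    rw [div_le_one (by linarith)]
    linarith
  generalize ((a / 2) * ((r : ℝ) - 1 - ((j : ℕ) : ℝ)) + (s j : ℝ)) /
        (b + (a / 2) * ((r : ℝ) - 1 - ((j : ℕ) : ℝ)) + (s j : ℝ)) = q at *
  have hb1 : 0 < 1 / (1 + b) := by positivity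
  have hm : 0 < (1 / (1 + a / 2)) ^ (r - 1) := by positivity
  have l1 := mul_le_mul q1 c1 hm.le (hb1.le.trans q1)
  have l2 := mul_le_mul q2 c2 (hm.le.trans c1) zero_le_one
  constructor
  · nlinarith [mul_le_mul_of_nonneg_left l1 hT0]
  · nlinarith [mul_le_mul_of_nonneg_left l2 hT0]

/-- Theorem 3.6: `inf{τ(s) : s ≠ 0 a signature} > 0` if and only if the quantity
`B = inf Σ_j (a_{s−ε_j}/a_s)·(p − (a/2)(j−1) + s_j − 1)` is positive; equivalently,
the range of `D_{M^{(a)*}}` is closed iff `B > 0`. -/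
theorem tau_inf_pos_iff (r : ℕ) (hr : 0 < r) (a b : ℝ) (ha : 0 < a) (hb : 0 ≤ b)
    (w : (Fin r → ℕ) → ℝ) (hw : ∀ s : Fin r → ℕ, Antitone s → 0 < w s) :
    (∃ C : ℝ, 0 < C ∧ ∀ s : Fin r → ℕ, Antitone s → s ≠ 0 → C ≤ tau a b w s) ↔
      (∃ B : ℝ, 0 < B ∧ ∀ s : Fin r → ℕ, Antitone s → s ≠ 0 →
        B ≤ ∑ j ∈ Finset.univ.filter (fun j : Fin r => SigSub s j),
          (w (Function.update s j (s j - 1)) / w s) *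
            ((1 + (a / 2) * ((r : ℝ) - 1) + b) - (a / 2) * ((j : ℕ) : ℝ) + (s j : ℝ) - 1)) := by
  constructor
  · rintro ⟨C, hC, h⟩
    refine ⟨C / 2 ^ (r - 1), by positivity, fun s hs h0 => ?_⟩
    rw [div_le_iff₀' (by positivity), Finset.mul_sum]
    refine (h s hs h0).trans (Finset.sum_le_sum fun j hj => ?_)
    exact (term_bounds a b ha hb w hw s hs j (Finset.mem_filter.1 hj).2 _ rfl).2
  · rintro ⟨B, hB, h⟩
    refine ⟨(1 / (1 + b) * (1 / (1 + a / 2)) ^ (r - 1)) * B, by positivity, fun s hs h0 => ?_⟩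
    refine (mul_le_mul_of_nonneg_left (h s hs h0) (by positivity)).trans ?_
    rw [Finset.mul_sum]
    refine Finset.sum_le_sum fun j hj => ?_
    exact (term_bounds a b ha hb w hw s hs j (Finset.mem_filter.1 hj).2 _ rfl).1
end

section
/- With the notation of the context, for every nonzero signature s one has the pointwise lower bound τ(s) ≥ (1/((b+1)·(1 + (a/2)(r−1))^r)) · Σ, over those j for which s − ε_j is a signature, of (a_{s−ε_j}/a_s)·(p − (a/2)(j−1) + s_j − 1). (Key estimate in the proof of Theorem 3.6.) -/
open Finset
open scoped Classical

theorem cPrime_ge {r : ℕ} (a : ℝ) (ha : 0 < a) (s : Fin r → ℕ) (hs : Antitone s)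
    (j : Fin r) (hj : SigSub s j) :
    (1 / (1 + (a / 2) * ((r : ℝ) - 1))) ^ r ≤ cPrime a s j := by
  have hr1 : (1 : ℝ) ≤ r := by
    have := j.2
    exact_mod_cast (by omega : 1 ≤ r)
  have hx : 0 < a / 2 := by positivity
  generalize hxa : a / 2 = x at *
  have hD : 1 ≤ 1 + x * ((r : ℝ) - 1) := by nlinarith
  have hc0 : 0 ≤ 1 / (1 + x * ((r : ℝ) - 1)) := by positivity
  have hc1 : 1 / (1 + x * ((r : ℝ) - 1)) ≤ 1 := by
    rw [div_le_one (by linarith)]; exact hD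
  have hcard : (Finset.univ.erase j).card ≤ r := by
    refine (Finset.card_le_univ _).trans ?_
    simp
  refine (pow_le_pow_of_le_one hc0 hc1 hcard).trans ?_
  rw [← Finset.prod_const]
  unfold cPrime
  rw [hxa]
  apply Finset.prod_le_prod
  · intro k _; exact hc0
  intro k hk
  have hkj : k ≠ j := (Finset.mem_erase.mp hk).1
  rcases lt_or_gt_of_ne hkj with h | h
  · have h1 : (s j : ℝ) ≤ s k := by exact_mod_cast hs h.le
    have h2 : ((k : ℕ) : ℝ) + 1 ≤ ((j : ℕ) : ℝ) := by exact_mod_cast h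
    refine hc1.trans ?_
    have h3 : (s j : ℝ) - s k + x * (((k : ℕ) : ℝ) - ((j : ℕ) : ℝ)) < 0 := by nlinarith
    rw [le_div_iff_of_neg h3]
    nlinarith
  · have h0 := hj.2 h.le
    rw [Function.update_self, Function.update_of_ne hkj] at h0
    have h1 : (s k : ℝ) + 1 ≤ s j := by
      have := hj.1
      exact_mod_cast (by omega : s k + 1 ≤ s j)
    have h2 : ((j : ℕ) : ℝ) + 1 ≤ ((k : ℕ) : ℝ) := by exact_mod_cast h
    have h3 : ((j : ℕ) : ℝ) + 2 ≤ (r : ℝ) := by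
      have h4 : (j : ℕ) < (k : ℕ) := h
      have := k.2
      exact_mod_cast (by omega : (j : ℕ) + 2 ≤ r)
    have hj0 : (0 : ℝ) ≤ ((j : ℕ) : ℝ) := by positivity
    have hm : 1 ≤ (s j : ℝ) - (s k : ℝ) := by linarith
    generalize (s j : ℝ) - (s k : ℝ) = m at *
    have hl : 1 ≤ ((k : ℕ) : ℝ) - ((j : ℕ) : ℝ) := by linarith
    generalize ((k : ℕ) : ℝ) - ((j : ℕ) : ℝ) = l at *
    have hq : 1 ≤ (r : ℝ) - 1 := by linarith
    generalize (r : ℝ) - 1 = q at *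
    rw [div_le_div_iff₀ (by linarith) (by nlinarith)]
    have e1 : 0 ≤ x * (l - 1) * (x * q) := by
      have : 0 ≤ l - 1 := by linarith
      positivity
    have e2 : 1 ≤ m * q := by nlinarith
    have e3 : x ≤ x * (m * q) := by nlinarith
    nlinarith

/-- The key estimate in the proof of Theorem 3.6: for every nonzero signature `s`,
`τ(s) ≥ (1/((b+1)(1 + (a/2)(r−1))^r)) · Σ_j (a_{s−ε_j}/a_s)·(p − (a/2)(j−1) + s_j − 1)`,
the sum being over those `j` for which `s − ε_j` is a signature. -/
theorem tau_lower_bound (r : ℕ) (hr : 0 < r) (a b : ℝ) (ha : 0 < a) (hb : 0 ≤ b)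
    (w : (Fin r → ℕ) → ℝ) (hw : ∀ s : Fin r → ℕ, Antitone s → 0 < w s)
    (s : Fin r → ℕ) (hs : Antitone s) (hs0 : s ≠ 0) :
    (1 / ((b + 1) * (1 + (a / 2) * ((r : ℝ) - 1)) ^ r)) *
        (∑ j ∈ Finset.univ.filter (fun j : Fin r => SigSub s j),
          (w (Function.update s j (s j - 1)) / w s) *
            ((1 + (a / 2) * ((r : ℝ) - 1) + b) - (a / 2) * ((j : ℕ) : ℝ) + (s j : ℝ) - 1)) ≤
      tau a b w s := by
  unfold tau
  rw [Finset.mul_sum]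
  apply Finset.sum_le_sum
  intro j hj
  have hj := (Finset.mem_filter.mp hj).2
  have hC := cPrime_ge a ha s hs j hj
  have hr1 : (1 : ℝ) ≤ r := by exact_mod_cast hr
  have hD : 0 < 1 + (a / 2) * ((r : ℝ) - 1) := by
    have : 0 ≤ (r : ℝ) - 1 := by linarith
    positivity
  have hjr : 0 ≤ (r : ℝ) - 1 - ((j : ℕ) : ℝ) := by
    have : ((j : ℕ) : ℝ) + 1 ≤ r := by exact_mod_cast j.2
    linarith
  have hsj : (1 : ℝ) ≤ s j := by exact_mod_cast hj.1
  have hxn : 0 ≤ (a / 2) * ((r : ℝ) - 1 - ((j : ℕ) : ℝ)) := by positivity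
  have hW : 0 ≤ w (Function.update s j (s j - 1)) / w s :=
    (div_pos (hw _ hj.2) (hw _ hs)).le
  have hP : 0 ≤ (1 + (a / 2) * ((r : ℝ) - 1) + b) - (a / 2) * ((j : ℕ) : ℝ) + (s j : ℝ) - 1 := by
    nlinarith
  have hF : 1 / (b + 1) ≤ ((a / 2) * ((r : ℝ) - 1 - ((j : ℕ) : ℝ)) + (s j : ℝ)) /
        (b + (a / 2) * ((r : ℝ) - 1 - ((j : ℕ) : ℝ)) + (s j : ℝ)) := by
    generalize (a / 2) * ((r : ℝ) - 1 - ((j : ℕ) : ℝ)) = y at *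
    rw [div_le_div_iff₀ (by linarith) (by linarith)]
    nlinarith
  have hb1 : 0 ≤ 1 / (b + 1) := by positivity
  have hFC := mul_le_mul hF hC (by positivity) (hb1.trans hF)
  have key := mul_le_mul_of_nonneg_left hFC (mul_nonneg hW hP)
  have e : 1 / ((b + 1) * (1 + (a / 2) * ((r : ℝ) - 1)) ^ r) =
      1 / (b + 1) * (1 / (1 + (a / 2) * ((r : ℝ) - 1))) ^ r := by
    rw [one_div_pow, one_div_mul_one_div]
  rw [e, mul_comm]
  refine key.trans (le_of_eq ?_)
  ring
end

section
/- Let r be a positive integer, a > 0, b ≥ 0 reals, p = 1 + (a/2)(r−1) + b, and let ν > (a/2)(r−1) be real. Then for every signature s and every j ∈ {1,…,r} such that s − ε_j is a signature, one has ((ν)_{s−ε_j}/(ν)_s)·((p)_s/(p)_{s−ε_j}) = (p − (a/2)(j−1) + s_j − 1)/(ν − (a/2)(j−1) + s_j − 1), and this quantity is at most max{ 1, (1+b)/(ν − (a/2)(r−1)) }. In particular the supremum of these quantities over all such pairs (s, j) is finite. (Corollary 3.5: hence the multiplication d-tuple on the weighted Bergman space H^{(ν)} is bounded for ν > (a/2)(r−1).)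 -/
open Finset

/-- The generalized Pochhammer symbol
`(ν)_s = ∏_{j=1}^r ∏_{l=1}^{s_j} (ν − (a/2)(j−1) + l − 1)` (zero-based indices). -/
noncomputable def poch {r : ℕ} (a ν : ℝ) (s : Fin r → ℕ) : ℝ :=
  ∏ j : Fin r, ∏ l ∈ Finset.range (s j), (ν - (a / 2) * ((j : ℕ) : ℝ) + (l : ℝ))

lemma poch_update_mul {r : ℕ} (a ν : ℝ) (s : Fin r → ℕ) (j : Fin r) (hj : 1 ≤ s j) :
    poch a ν s = poch a ν (Function.update s j (s j - 1)) *
      (ν - (a / 2) * ((j : ℕ) : ℝ) + (s j : ℝ) - 1) := by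
  unfold poch
  rw [← Finset.mul_prod_erase Finset.univ _ (Finset.mem_univ j),
    ← Finset.mul_prod_erase Finset.univ (fun i : Fin r => ∏ l ∈ Finset.range
      (Function.update s j (s j - 1) i), (ν - (a / 2) * ((i : ℕ) : ℝ) + (l : ℝ)))
      (Finset.mem_univ j)]
  have h : ∏ i ∈ Finset.univ.erase j, ∏ l ∈ Finset.range (Function.update s j (s j - 1) i),
      (ν - (a / 2) * ((i : ℕ) : ℝ) + (l : ℝ)) =
      ∏ i ∈ Finset.univ.erase j, ∏ l ∈ Finset.range (s i),
      (ν - (a / 2) * ((i : ℕ) : ℝ) + (l : ℝ)) := by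
    apply Finset.prod_congr rfl
    intro i hi
    rw [Function.update_of_ne (Finset.ne_of_mem_erase hi)]
  rw [h]
  simp only [Function.update_self]
  obtain ⟨n, hn⟩ : ∃ n, s j = n + 1 := ⟨s j - 1, by omega⟩
  rw [hn, Finset.prod_range_succ]
  simp only [Nat.add_sub_cancel]
  push_cast
  ring

lemma base_le {r : ℕ} (a : ℝ) (ha : 0 < a) (j : Fin r) :
    (a / 2) * ((j : ℕ) : ℝ) ≤ (a / 2) * ((r : ℝ) - 1) := by
  have h : ((j : ℕ) : ℝ) + 1 ≤ r := by exact_mod_cast j.isLt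
  apply mul_le_mul_of_nonneg_left _ (by positivity)
  linarith

lemma poch_pos' {r : ℕ} (a ν : ℝ) (ha : 0 < a) (hν : (a / 2) * ((r : ℝ) - 1) < ν)
    (s : Fin r → ℕ) : 0 < poch a ν s := by
  unfold poch
  refine Finset.prod_pos fun i _ => Finset.prod_pos fun l _ => ?_
  have h := base_le a ha i
  have hl : (0 : ℝ) ≤ l := Nat.cast_nonneg l
  linarith

/-- Corollary 3.5: for `ν > (a/2)(r−1)` and `p = 1 + (a/2)(r−1) + b`, whenever
`s − ε_j` is a signature one has
`((ν)_{s−ε_j}/(ν)_s)·((p)_s/(p)_{s−ε_j}) = (p − (a/2)(j−1) + s_j − 1)/(ν − (a/2)(j−1) + s_j − 1)`,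
this quantity is at most `max{1, (1+b)/(ν − (a/2)(r−1))}`, and in particular the
supremum of these quantities is finite (so the multiplication tuple on `H^{(ν)}`
is bounded). -/
theorem bergman_ratio_eq_and_bounded (r : ℕ) (hr : 0 < r) (a b : ℝ) (ha : 0 < a) (hb : 0 ≤ b)
    (ν : ℝ) (hν : (a / 2) * ((r : ℝ) - 1) < ν) :
    (∀ (s : Fin r → ℕ) (j : Fin r), Antitone s → SigSub s j →
      (poch a ν (Function.update s j (s j - 1)) / poch a ν s) *
          (poch a (1 + (a / 2) * ((r : ℝ) - 1) + b) s /
            poch a (1 + (a / 2) * ((r : ℝ) - 1) + b) (Function.update s j (s j - 1))) =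
        ((1 + (a / 2) * ((r : ℝ) - 1) + b) - (a / 2) * ((j : ℕ) : ℝ) + (s j : ℝ) - 1) /
          (ν - (a / 2) * ((j : ℕ) : ℝ) + (s j : ℝ) - 1) ∧
      ((1 + (a / 2) * ((r : ℝ) - 1) + b) - (a / 2) * ((j : ℕ) : ℝ) + (s j : ℝ) - 1) /
          (ν - (a / 2) * ((j : ℕ) : ℝ) + (s j : ℝ) - 1) ≤
        max 1 ((1 + b) / (ν - (a / 2) * ((r : ℝ) - 1)))) ∧
    BddAbove {x : ℝ | ∃ (s : Fin r → ℕ) (j : Fin r), Antitone s ∧ SigSub s j ∧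
      x = (poch a ν (Function.update s j (s j - 1)) / poch a ν s) *
        (poch a (1 + (a / 2) * ((r : ℝ) - 1) + b) s /
          poch a (1 + (a / 2) * ((r : ℝ) - 1) + b) (Function.update s j (s j - 1)))} := by
  have key : ∀ (s : Fin r → ℕ) (j : Fin r), Antitone s → SigSub s j →
      (poch a ν (Function.update s j (s j - 1)) / poch a ν s) *
          (poch a (1 + (a / 2) * ((r : ℝ) - 1) + b) s /
            poch a (1 + (a / 2) * ((r : ℝ) - 1) + b) (Function.update s j (s j - 1))) =
        ((1 + (a / 2) * ((r : ℝ) - 1) + b) - (a / 2) * ((j : ℕ) : ℝ) + (s j : ℝ) - 1) /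
          (ν - (a / 2) * ((j : ℕ) : ℝ) + (s j : ℝ) - 1) ∧
      ((1 + (a / 2) * ((r : ℝ) - 1) + b) - (a / 2) * ((j : ℕ) : ℝ) + (s j : ℝ) - 1) /
          (ν - (a / 2) * ((j : ℕ) : ℝ) + (s j : ℝ) - 1) ≤
        max 1 ((1 + b) / (ν - (a / 2) * ((r : ℝ) - 1))) := by
    intro s j _ hs
    have hj := hs.1
    have hj' : (1 : ℝ) ≤ s j := by exact_mod_cast hj
    have hbase := base_le a ha j
    have hD : 0 < ν - (a / 2) * ((j : ℕ) : ℝ) + (s j : ℝ) - 1 := by linarith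
    constructor
    · rw [poch_update_mul a ν s j hj,
        poch_update_mul a (1 + (a / 2) * ((r : ℝ) - 1) + b) s j hj]
      have h1 := poch_pos' a ν ha hν (Function.update s j (s j - 1))
      have h2 := poch_pos' a (1 + (a / 2) * ((r : ℝ) - 1) + b) ha (by linarith)
        (Function.update s j (s j - 1))
      rw [mul_div_cancel_left₀ _ h2.ne', div_mul_eq_div_div, div_self h1.ne',
        one_div_mul_eq_div]
    · rcases le_total (1 + b) (ν - (a / 2) * ((r : ℝ) - 1)) with h | h
      · apply le_max_of_le_left
        rw [div_le_one hD]
        linarith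
      · apply le_max_of_le_right
        rw [div_le_div_iff₀ hD (by linarith)]
        have ht : 0 ≤ (a / 2) * ((r : ℝ) - 1) - (a / 2) * ((j : ℕ) : ℝ) + (s j : ℝ) - 1 := by
          linarith
        linarith [mul_nonneg (sub_nonneg.2 h) ht]
  refine ⟨key, max 1 ((1 + b) / (ν - (a / 2) * ((r : ℝ) - 1))), ?_⟩
  rintro x ⟨s, j, h1, h2, rfl⟩
  rw [(key s j h1 h2).1]
  exact (key s j h1 h2).2
end

section
/- Let r be a positive integer, a > 0, b ≥ 0, ε > 0 reals. Then for every nonzero signature s, Σ, over those j ∈ {1,…,r} for which s − ε_j is a signature, of (b + (a/2)(r−j) + s_j)/((a/2)(r−j) + s_j + ε − 1) ≥ min{ 1, 1/ε }; in particular this sum is bounded below by 1 when ε ≤ b+1 and by 1/ε when ε ≥ b+1. (Corollary 3.7: taking ν = (a/2)(r−1) + ε, this shows that the quantity B of Theorem 3.6 is positive for the weighted Bergman space H^{(ν)}, so the range of D_{M^{(ν)*}} is closed.) -/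
open Finset
open scoped Classical

/-- Corollary 3.7: for every `ε > 0` and every nonzero signature `s`, the sum
`Σ_j (b + (a/2)(r−j) + s_j)/((a/2)(r−j) + s_j + ε − 1)`, over those `j` for which
`s − ε_j` is a signature, is bounded below by `min{1, 1/ε}`; in fact it is at least
`1` when `ε ≤ b+1` and at least `1/ε` when `ε ≥ b+1`.  (Taking `ν = (a/2)(r−1) + ε`
this shows that the range of `D_{M^{(ν)*}}` is closed.) -/
theorem bergman_sum_lower_bound (r : ℕ) (hr : 0 < r) (a b ε : ℝ)
    (ha : 0 < a) (hb : 0 ≤ b) (hε : 0 < ε)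
    (s : Fin r → ℕ) (hs : Antitone s) (hs0 : s ≠ 0) :
    let S : ℝ := ∑ j ∈ Finset.univ.filter (fun j : Fin r => SigSub s j),
      (b + (a / 2) * ((r : ℝ) - 1 - ((j : ℕ) : ℝ)) + (s j : ℝ)) /
        ((a / 2) * ((r : ℝ) - 1 - ((j : ℕ) : ℝ)) + (s j : ℝ) + ε - 1)
    min 1 (1 / ε) ≤ S ∧ (ε ≤ b + 1 → 1 ≤ S) ∧ (b + 1 ≤ ε → 1 / ε ≤ S) := by
  intro S
  have hx : ∀ j : Fin r, 1 ≤ s j →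
      1 ≤ (a / 2) * ((r : ℝ) - 1 - ((j : ℕ) : ℝ)) + (s j : ℝ) := by
    intro j hj
    have h1 : (1 : ℝ) ≤ s j := by exact_mod_cast hj
    have h2 : ((j : ℕ) : ℝ) + 1 ≤ r := by exact_mod_cast j.2
    have h3 : 0 ≤ (a / 2) * ((r : ℝ) - 1 - ((j : ℕ) : ℝ)) :=
      mul_nonneg (by linarith) (by linarith)
    linarith
  -- the last index with a nonzero entry can be decreased
  obtain ⟨j, hj⟩ : ∃ j, SigSub s j := by
    have hne : (Finset.univ.filter (fun j : Fin r => 1 ≤ s j)).Nonempty := by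
      obtain ⟨j, hj⟩ := Function.ne_iff.mp hs0
      exact ⟨j, by simpa [Nat.one_le_iff_ne_zero] using hj⟩
    obtain ⟨j, hj, hmax⟩ := Finset.exists_max_image _ (fun j : Fin r => j) hne
    have hj1 : 1 ≤ s j := by simpa using hj
    have hz : ∀ i, j < i → s i = 0 := by
      intro i hi
      by_contra h
      have := hmax i (by simpa [Nat.one_le_iff_ne_zero] using h)
      exact absurd hi (not_lt.mpr this)
    refine ⟨j, hj1, ?_⟩
    intro p q hpq
    have hs' := hs hpq
    by_cases hq : q = j
    · by_cases hp : p = j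
      · rw [hp, hq]
      · subst hq
        simp only [Function.update_self, Function.update_of_ne hp]
        omega
    · by_cases hp : p = j
      · subst hp
        rw [Function.update_of_ne hq, hz q (lt_of_le_of_ne hpq (Ne.symm hq))]
        exact Nat.zero_le _
      · rw [Function.update_of_ne hq, Function.update_of_ne hp]
        exact hs'
  have hS : (b + (a / 2) * ((r : ℝ) - 1 - ((j : ℕ) : ℝ)) + (s j : ℝ)) /
        ((a / 2) * ((r : ℝ) - 1 - ((j : ℕ) : ℝ)) + (s j : ℝ) + ε - 1) ≤ S := by
    refine Finset.single_le_sum (f := fun j : Fin r =>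
      (b + (a / 2) * ((r : ℝ) - 1 - ((j : ℕ) : ℝ)) + (s j : ℝ)) /
        ((a / 2) * ((r : ℝ) - 1 - ((j : ℕ) : ℝ)) + (s j : ℝ) + ε - 1)) ?_ (by simpa using hj)
    intro i hi
    have hi' : SigSub s i := by simpa using hi
    have := hx i hi'.1
    exact div_nonneg (by linarith) (by linarith)
  have hxj := hx j hj.1
  have h1 : ε ≤ b + 1 → 1 ≤ S := by
    intro h
    refine le_trans ?_ hS
    rw [le_div_iff₀ (by linarith)]
    linarith
  have h2 : b + 1 ≤ ε → 1 / ε ≤ S := by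
    intro h
    refine le_trans ?_ hS
    rw [div_le_div_iff₀ hε (by linarith)]
    nlinarith [mul_nonneg (by linarith : 0 ≤ ε - 1) (sub_nonneg.mpr hxj), mul_nonneg hb hε.le]
  refine ⟨?_, h1, h2⟩
  rcases le_total ε (b + 1) with h | h
  · exact (min_le_left _ _).trans (h1 h)
  · exact (min_le_right _ _).trans (h2 h)
end

section
/- With the notation of the context, the following are equivalent: (i) the tuples M^{(1)} = (M_1^{(1)},…,M_d^{(1)}) on H_1 and M^{(2)} = (M_1^{(2)},…,M_d^{(2)}) on H_2 are similar, i.e., there exists a bounded invertible linear operator X : H_1 → H_2 with X M_j^{(1)} = M_j^{(2)} X for all j = 1,…,d; (ii) there exist constants α, β > 0 such that α·‖p‖_1 ≤ ‖p‖_2 ≤ β·‖p‖_1 for every polynomial p. (This is the equivalence (i) ⇔ (ii) of Theorem 5.2, stated for multiplication tuples on completions of the polynomial ring; in the paper H_1, H_2 are reproducing kernel Hilbert spaces on a bounded domain Ω ⊆ ℂ^d in which the polynomials are dense.) -/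
open scoped ComplexInnerProductSpace

section Helpers

variable {d : ℕ} {H K : Type*}
  [NormedAddCommGroup H] [InnerProductSpace ℂ H]
  [NormedAddCommGroup K] [InnerProductSpace ℂ K]

/-- Pythagoras for the homogeneous decomposition. -/
lemma aux_norm_sq (ι : MvPolynomial (Fin d) ℂ →ₗ[ℂ] H)
    (horth : ∀ (m n : ℕ) (p q : MvPolynomial (Fin d) ℂ),
      p.IsHomogeneous m → q.IsHomogeneous n → m ≠ n → ⟪ι p, ι q⟫ = 0)
    (p : MvPolynomial (Fin d) ℂ) :
    ‖ι p‖ ^ 2 = ∑ i ∈ Finset.range (p.totalDegree + 1),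
      ‖ι (MvPolynomial.homogeneousComponent i p)‖ ^ 2 := by
  have key : ⟪ι p, ι p⟫ = ∑ i ∈ Finset.range (p.totalDegree + 1),
      ⟪ι (MvPolynomial.homogeneousComponent i p), ι (MvPolynomial.homogeneousComponent i p)⟫ := by
    have e : ι p = ∑ i ∈ Finset.range (p.totalDegree + 1),
        ι (MvPolynomial.homogeneousComponent i p) := by
      rw [← map_sum, MvPolynomial.sum_homogeneousComponent]
    rw [e, sum_inner]
    refine Finset.sum_congr rfl fun i hi => ?_
    rw [inner_sum, Finset.sum_eq_single_of_mem i hi]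
    intro j _ hji
    exact horth i j _ _ (MvPolynomial.homogeneousComponent_isHomogeneous i p)
      (MvPolynomial.homogeneousComponent_isHomogeneous j p) (Ne.symm hji)
  simp only [inner_self_eq_norm_sq_to_K] at key
  exact_mod_cast key

/-- The lowest-degree pairing only sees the constant term. -/
lemma aux_pairing (ι : MvPolynomial (Fin d) ℂ →ₗ[ℂ] H)
    (horth : ∀ (m n : ℕ) (p q : MvPolynomial (Fin d) ℂ),
      p.IsHomogeneous m → q.IsHomogeneous n → m ≠ n → ⟪ι p, ι q⟫ = 0)
    (n : ℕ) (p q r : MvPolynomial (Fin d) ℂ) (hp : p.IsHomogeneous n) (hq : q.IsHomogeneous n) :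
    ⟪ι q, ι (p * r)⟫ = MvPolynomial.coeff 0 r * ⟪ι q, ι p⟫ := by
  have e : ι (p * r) = ∑ i ∈ Finset.range (r.totalDegree + 1),
      ι (p * MvPolynomial.homogeneousComponent i r) := by
    rw [← map_sum, ← Finset.mul_sum, MvPolynomial.sum_homogeneousComponent]
  rw [e, inner_sum, Finset.sum_eq_single_of_mem 0 (by simp)]
  · rw [MvPolynomial.homogeneousComponent_zero, mul_comm p, ← MvPolynomial.smul_eq_C_mul,
      map_smul, inner_smul_right]
  · intro j _ hj
    exact horth n (n + j) _ _ hq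
      (hp.mul (MvPolynomial.homogeneousComponent_isHomogeneous j r)) (by omega)

/-- The intertwiner is determined by the image of the constant one. -/
lemma aux_op (ι : MvPolynomial (Fin d) ℂ →ₗ[ℂ] H) (κ : MvPolynomial (Fin d) ℂ →ₗ[ℂ] K)
    (M : Fin d → H →L[ℂ] H) (T : Fin d → K →L[ℂ] K)
    (hM : ∀ (j : Fin d) (p : MvPolynomial (Fin d) ℂ), M j (ι p) = ι (MvPolynomial.X j * p))
    (hMTwo : ∀ (j : Fin d) (p : MvPolynomial (Fin d) ℂ), T j (κ p) = κ (MvPolynomial.X j * p))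
    (X : H →L[ℂ] K) (hX : ∀ (j : Fin d) (v : H), X (M j v) = T j (X v))
    (p : MvPolynomial (Fin d) ℂ) :
    ∃ A : K →L[ℂ] K, (∀ r, A (κ r) = κ (p * r)) ∧ X (ι p) = A (X (ι 1)) := by
  induction p using MvPolynomial.induction_on with
  | C a =>
    refine ⟨a • ContinuousLinearMap.id ℂ K, fun r => ?_, ?_⟩
    · simp [← MvPolynomial.smul_eq_C_mul]
    · have : (MvPolynomial.C a : MvPolynomial (Fin d) ℂ) = a • 1 := by
        rw [MvPolynomial.smul_eq_C_mul, mul_one]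
      simp [this]
  | add p q hp hq =>
    obtain ⟨A, h1, h2⟩ := hp
    obtain ⟨B, h3, h4⟩ := hq
    exact ⟨A + B, fun r => by simp [h1, h3, add_mul], by simp [h2, h4]⟩
  | mul_X p j hp =>
    obtain ⟨A, h1, h2⟩ := hp
    refine ⟨(T j).comp A, fun r => ?_, ?_⟩
    · simp only [ContinuousLinearMap.comp_apply, h1, hMTwo]
      congr 1; ring
    · rw [mul_comm, ← hM, hX, h2]; rfl

lemma aux_oneSided (ι : MvPolynomial (Fin d) ℂ →ₗ[ℂ] H) (κ : MvPolynomial (Fin d) ℂ →ₗ[ℂ] K)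
    (hinjTwo : Function.Injective κ) (hdense : DenseRange ι) (hdenseTwo : DenseRange κ)
    (horth : ∀ (m n : ℕ) (p q : MvPolynomial (Fin d) ℂ),
      p.IsHomogeneous m → q.IsHomogeneous n → m ≠ n → ⟪ι p, ι q⟫ = 0)
    (horthTwo : ∀ (m n : ℕ) (p q : MvPolynomial (Fin d) ℂ),
      p.IsHomogeneous m → q.IsHomogeneous n → m ≠ n → ⟪κ p, κ q⟫ = 0)
    (M : Fin d → H →L[ℂ] H) (T : Fin d → K →L[ℂ] K)
    (hM : ∀ (j : Fin d) (p : MvPolynomial (Fin d) ℂ), M j (ι p) = ι (MvPolynomial.X j * p))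
    (hMTwo : ∀ (j : Fin d) (p : MvPolynomial (Fin d) ℂ), T j (κ p) = κ (MvPolynomial.X j * p))
    (X : H →L[ℂ] K) (hsurj : Function.Surjective X)
    (hX : ∀ (j : Fin d) (v : H), X (M j v) = T j (X v)) :
    ∃ β : ℝ, 0 < β ∧ ∀ p, ‖κ p‖ ≤ β * ‖ι p‖ := by
  have hop := aux_op ι κ M T hM hMTwo X hX
  have hone : (1 : MvPolynomial (Fin d) ℂ).IsHomogeneous 0 := MvPolynomial.isHomogeneous_one _ _
  have h1ne : κ 1 ≠ 0 := fun h => one_ne_zero (hinjTwo (h.trans (map_zero κ).symm))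
  have key : ∀ (n : ℕ) (p : MvPolynomial (Fin d) ℂ), p.IsHomogeneous n →
      ⟪κ p, X (ι p)⟫ * ⟪κ 1, κ 1⟫ = ⟪κ 1, X (ι 1)⟫ * ⟪κ p, κ p⟫ := by
    intro n p hp
    obtain ⟨A, hA, hXA⟩ := hop p
    rw [hXA]
    generalize X (ι 1) = u
    refine hdenseTwo.induction_on (p := fun u => ⟪κ p, A u⟫ * ⟪κ 1, κ 1⟫ =
      ⟪κ 1, u⟫ * ⟪κ p, κ p⟫) u (isClosed_eq (by fun_prop) (by fun_prop)) ?_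
    intro r
    have h2 := aux_pairing κ horthTwo 0 1 1 r hone hone
    rw [one_mul] at h2
    rw [hA, aux_pairing κ horthTwo n p p r hp hp, h2]
    ring
  have key0 : ∀ p : MvPolynomial (Fin d) ℂ,
      ⟪κ 1, X (ι p)⟫ = MvPolynomial.coeff 0 p * ⟪κ 1, X (ι 1)⟫ := by
    intro p
    obtain ⟨A, hA, hXA⟩ := hop p
    rw [hXA]
    generalize X (ι 1) = u
    refine hdenseTwo.induction_on (p := fun u => ⟪κ 1, A u⟫ =
      MvPolynomial.coeff 0 p * ⟪κ 1, u⟫) u (isClosed_eq (by fun_prop) (by fun_prop)) ?_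
    intro r
    have h2 := fun r => aux_pairing κ horthTwo 0 1 1 r hone hone
    simp only [one_mul] at h2
    rw [hA, h2, h2 r]
    simp only [← MvPolynomial.constantCoeff_eq, map_mul]
    ring
  have hc : ⟪κ 1, X (ι 1)⟫ ≠ 0 := by
    intro h0
    have hz : ∀ v, ⟪κ 1, X v⟫ = 0 := by
      intro v
      refine hdense.induction_on (p := fun v => ⟪κ 1, X v⟫ = 0) v
        (isClosed_eq (by fun_prop) (by fun_prop)) ?_
      intro p
      rw [key0, h0, mul_zero]
    obtain ⟨v, hv⟩ := hsurj (κ 1)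
    have := hz v
    rw [hv, inner_self_eq_zero] at this
    exact h1ne this
  set c : ℝ := ‖⟪κ 1, X (ι 1)⟫‖ with hcdef
  have hcpos : 0 < c := norm_pos_iff.mpr hc
  have hNpos : 0 < ‖κ 1‖ := norm_pos_iff.mpr h1ne
  set β : ℝ := (‖X‖ * ‖κ 1‖ ^ 2 + 1) / c with hβ
  have hβpos : 0 < β := by positivity
  have hhom : ∀ (n : ℕ) (p : MvPolynomial (Fin d) ℂ), p.IsHomogeneous n →
      ‖κ p‖ ≤ β * ‖ι p‖ := by
    intro n p hp
    have h := congrArg norm (key n p hp)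
    rw [norm_mul, norm_mul, inner_self_eq_norm_sq_to_K, inner_self_eq_norm_sq_to_K] at h
    simp only [norm_pow, RCLike.norm_ofReal, abs_norm] at h
    rw [← hcdef] at h
    have h3 : ‖⟪κ p, X (ι p)⟫‖ ≤ ‖κ p‖ * (‖X‖ * ‖ι p‖) :=
      (norm_inner_le_norm _ _).trans (by gcongr; exact X.le_opNorm _)
    rcases (norm_nonneg (κ p)).eq_or_lt with h0 | hpos
    · rw [← h0]; positivity
    · have h4 : ‖κ p‖ * (c * ‖κ p‖) ≤ ‖κ p‖ * (‖X‖ * ‖ι p‖ * ‖κ 1‖ ^ 2) := by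
        calc ‖κ p‖ * (c * ‖κ p‖) = c * ‖κ p‖ ^ 2 := by ring
          _ = ‖⟪κ p, X (ι p)⟫‖ * ‖κ 1‖ ^ 2 := h.symm
          _ ≤ (‖κ p‖ * (‖X‖ * ‖ι p‖)) * ‖κ 1‖ ^ 2 := by gcongr
          _ = _ := by ring
      have h5 := le_of_mul_le_mul_left h4 hpos
      rw [hβ, div_mul_eq_mul_div, le_div_iff₀ hcpos]
      nlinarith [norm_nonneg (ι p)]
  refine ⟨β, hβpos, fun p => ?_⟩
  refine (sq_le_sq₀ (norm_nonneg _) (by positivity)).mp ?_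
  rw [mul_pow, aux_norm_sq ι horth, aux_norm_sq κ horthTwo, Finset.mul_sum]
  refine Finset.sum_le_sum fun i _ => ?_
  rw [← mul_pow]
  gcongr
  exact hhom i _ (MvPolynomial.homogeneousComponent_isHomogeneous i p)

end Helpers

/-- Theorem 5.2, equivalence (i) ⇔ (ii): let `H₁`, `H₂` be Hilbert space
completions of the polynomial algebra `ℂ[z_1,…,z_d]` (with dense embeddings
`ι₁, ι₂`, homogeneous polynomials of different degrees being orthogonal) on which
the coordinate multiplications extend to bounded operators `M₁ j`, `M₂ j`.  Then
the multiplication tuples are similar (via a bounded invertible intertwiner) iff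
there are constants `α, β > 0` with `α‖p‖₁ ≤ ‖p‖₂ ≤ β‖p‖₁` for all polynomials. -/
theorem similarity_iff_norm_comparable (d : ℕ) (hd : 0 < d)
    {H₁ H₂ : Type*}
    [NormedAddCommGroup H₁] [InnerProductSpace ℂ H₁] [CompleteSpace H₁]
    [NormedAddCommGroup H₂] [InnerProductSpace ℂ H₂] [CompleteSpace H₂]
    (ι₁ : MvPolynomial (Fin d) ℂ →ₗ[ℂ] H₁) (ι₂ : MvPolynomial (Fin d) ℂ →ₗ[ℂ] H₂)
    (hinj₁ : Function.Injective ι₁) (hinj₂ : Function.Injective ι₂)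
    (hdense₁ : DenseRange ι₁) (hdense₂ : DenseRange ι₂)
    (horth₁ : ∀ (m n : ℕ) (p q : MvPolynomial (Fin d) ℂ),
      p.IsHomogeneous m → q.IsHomogeneous n → m ≠ n → ⟪ι₁ p, ι₁ q⟫ = 0)
    (horth₂ : ∀ (m n : ℕ) (p q : MvPolynomial (Fin d) ℂ),
      p.IsHomogeneous m → q.IsHomogeneous n → m ≠ n → ⟪ι₂ p, ι₂ q⟫ = 0)
    (M₁ : Fin d → H₁ →L[ℂ] H₁) (M₂ : Fin d → H₂ →L[ℂ] H₂)
    (hM₁ : ∀ (j : Fin d) (p : MvPolynomial (Fin d) ℂ),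
      M₁ j (ι₁ p) = ι₁ (MvPolynomial.X j * p))
    (hM₂ : ∀ (j : Fin d) (p : MvPolynomial (Fin d) ℂ),
      M₂ j (ι₂ p) = ι₂ (MvPolynomial.X j * p)) :
    (∃ X : H₁ ≃L[ℂ] H₂, ∀ (j : Fin d) (v : H₁), X (M₁ j v) = M₂ j (X v)) ↔
      (∃ α β : ℝ, 0 < α ∧ 0 < β ∧ ∀ p : MvPolynomial (Fin d) ℂ,
        α * ‖ι₁ p‖ ≤ ‖ι₂ p‖ ∧ ‖ι₂ p‖ ≤ β * ‖ι₁ p‖) := by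
  constructor
  · rintro ⟨X, hX⟩
    obtain ⟨β, hβ, hb⟩ := aux_oneSided ι₁ ι₂ hinj₂ hdense₁ hdense₂ horth₁ horth₂ M₁ M₂ hM₁ hM₂
      (X : H₁ →L[ℂ] H₂) X.surjective hX
    obtain ⟨γ, hγ, hg⟩ := aux_oneSided ι₂ ι₁ hinj₁ hdense₂ hdense₁ horth₂ horth₁ M₂ M₁ hM₂ hM₁
      (X.symm : H₂ →L[ℂ] H₁) X.symm.surjective (fun j v => by
        apply X.injective
        simp [hX])
    refine ⟨γ⁻¹, β, inv_pos.mpr hγ, hβ, fun p => ⟨?_, hb p⟩⟩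
    rw [inv_mul_le_iff₀ hγ]
    exact hg p
  · rintro ⟨α, β, hα, hβ, h⟩
    have hn₁ : ∃ C, ∀ x, ‖ι₂ ((LinearEquiv.refl ℂ (MvPolynomial (Fin d) ℂ)) x)‖ ≤ C * ‖ι₁ x‖ :=
      ⟨β, fun x => (h x).2⟩
    have hn₂ : ∃ C, ∀ x, ‖ι₁ ((LinearEquiv.refl ℂ (MvPolynomial (Fin d) ℂ)).symm x)‖
        ≤ C * ‖ι₂ x‖ :=
      ⟨α⁻¹, fun x => by
        rw [le_inv_mul_iff₀ hα]
        exact (h x).1⟩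
    let X : H₁ ≃L[ℂ] H₂ := (LinearEquiv.refl ℂ (MvPolynomial (Fin d) ℂ)).extend ι₁ ι₂
      hdense₁ hn₁ hdense₂ hn₂
    have hXι : ∀ p, X (ι₁ p) = ι₂ p := fun p =>
      LinearEquiv.extend_eq (LinearEquiv.refl ℂ (MvPolynomial (Fin d) ℂ)) ι₁ ι₂
        hdense₁ hn₁ hdense₂ hn₂ p
    refine ⟨X, fun j v => ?_⟩
    refine hdense₁.induction_on (p := fun v => X (M₁ j v) = M₂ j (X v)) v
      (isClosed_eq (by fun_prop) (by fun_prop)) ?_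
    intro p
    rw [hM₁, hXι, hXι, hM₂]
end

section
/- With the notation of the context, suppose X : H_1 → H_2 is a bounded invertible linear operator satisfying X M_j^{(1)} = M_j^{(2)} X for all j = 1,…,d. Then X is lower triangular with respect to the degree gradings: for all homogeneous polynomials p and q with deg q < deg p one has ⟨X p, q⟩_2 = 0; moreover ⟨X 1, 1⟩_2 ≠ 0. (This combines the claims X_{0,0} ≠ 0 and X_{0,s} = 0 for s > 0 established in the proof of Theorem 5.2 with the Remark following it, which asserts X_{r,s} = 0 for all s > r.) -/
open scoped ComplexInnerProductSpace

/-- The triangularity claims from the proof of Theorem 5.2 and the Remark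
following it: if `X` is a bounded invertible operator intertwining the two
multiplication tuples, then `X` is lower triangular with respect to the degree
gradings, i.e. `⟪X(ι₁ p), ι₂ q⟫ = 0` whenever `p, q` are homogeneous with
`deg q < deg p`; moreover `⟪X(ι₁ 1), ι₂ 1⟫ ≠ 0`. -/
theorem intertwiner_lower_triangular (d : ℕ) (hd : 0 < d)
    {H₁ H₂ : Type*}
    [NormedAddCommGroup H₁] [InnerProductSpace ℂ H₁] [CompleteSpace H₁]
    [NormedAddCommGroup H₂] [InnerProductSpace ℂ H₂] [CompleteSpace H₂]
    (ι₁ : MvPolynomial (Fin d) ℂ →ₗ[ℂ] H₁) (ι₂ : MvPolynomial (Fin d) ℂ →ₗ[ℂ] H₂)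
    (hinj₁ : Function.Injective ι₁) (hinj₂ : Function.Injective ι₂)
    (hdense₁ : DenseRange ι₁) (hdense₂ : DenseRange ι₂)
    (horth₁ : ∀ (m n : ℕ) (p q : MvPolynomial (Fin d) ℂ),
      p.IsHomogeneous m → q.IsHomogeneous n → m ≠ n → ⟪ι₁ p, ι₁ q⟫ = 0)
    (horth₂ : ∀ (m n : ℕ) (p q : MvPolynomial (Fin d) ℂ),
      p.IsHomogeneous m → q.IsHomogeneous n → m ≠ n → ⟪ι₂ p, ι₂ q⟫ = 0)
    (M₁ : Fin d → H₁ →L[ℂ] H₁) (M₂ : Fin d → H₂ →L[ℂ] H₂)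
    (hM₁ : ∀ (j : Fin d) (p : MvPolynomial (Fin d) ℂ),
      M₁ j (ι₁ p) = ι₁ (MvPolynomial.X j * p))
    (hM₂ : ∀ (j : Fin d) (p : MvPolynomial (Fin d) ℂ),
      M₂ j (ι₂ p) = ι₂ (MvPolynomial.X j * p))
    (X : H₁ ≃L[ℂ] H₂)
    (hX : ∀ (j : Fin d) (v : H₁), X (M₁ j v) = M₂ j (X v)) :
    (∀ (m n : ℕ) (p q : MvPolynomial (Fin d) ℂ),
      p.IsHomogeneous m → q.IsHomogeneous n → n < m → ⟪X (ι₁ p), ι₂ q⟫ = 0) ∧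
      ⟪X (ι₁ 1), ι₂ 1⟫ ≠ 0 := by
  -- multiplication operators for arbitrary polynomials
  have key : ∀ p : MvPolynomial (Fin d) ℂ, ∃ T : H₂ →L[ℂ] H₂,
      (∀ r, T (ι₂ r) = ι₂ (p * r)) ∧ (∀ r, X (ι₁ (p * r)) = T (X (ι₁ r))) := by
    intro p
    induction p using MvPolynomial.induction_on with
    | C a =>
      refine ⟨a • ContinuousLinearMap.id ℂ H₂, fun r => ?_, fun r => ?_⟩
      · simp [MvPolynomial.C_mul']
      · simp [MvPolynomial.C_mul']
    | add p q hp hq =>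
      obtain ⟨S, hS, hS'⟩ := hp
      obtain ⟨T, hT, hT'⟩ := hq
      refine ⟨S + T, fun r => ?_, fun r => ?_⟩
      · simp [add_mul, hS, hT]
      · simp [add_mul, hS', hT']
    | mul_X p j hp =>
      obtain ⟨S, hS, hS'⟩ := hp
      refine ⟨S.comp (M₂ j), fun r => ?_, fun r => ?_⟩
      · rw [ContinuousLinearMap.comp_apply, hM₂, hS, mul_assoc]
      · rw [ContinuousLinearMap.comp_apply, ← hX, hM₁, ← hS', mul_assoc]
  have tri : ∀ (m n : ℕ) (p q : MvPolynomial (Fin d) ℂ),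
      p.IsHomogeneous m → q.IsHomogeneous n → n < m → ⟪X (ι₁ p), ι₂ q⟫ = 0 := by
    intro m n p q hp hq hnm
    obtain ⟨T, hT, hT'⟩ := key p
    have hz : (fun v : H₂ => ⟪T v, ι₂ q⟫) = fun _ => 0 := by
      refine hdense₂.equalizer (by fun_prop) (by fun_prop) ?_
      funext r
      simp only [Function.comp_apply, hT]
      conv_lhs => rw [← MvPolynomial.sum_homogeneousComponent r]
      rw [Finset.mul_sum, map_sum, sum_inner]
      refine Finset.sum_eq_zero fun i _ => ?_
      exact horth₂ (m + i) n _ _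
        (hp.mul (MvPolynomial.homogeneousComponent_isHomogeneous i r)) hq (by omega)
    have h1 := hT' 1
    rw [mul_one] at h1
    rw [h1]
    exact congrFun hz _
  refine ⟨tri, fun h0 => ?_⟩
  have hp0 : ∀ p, ⟪X (ι₁ p), ι₂ 1⟫ = 0 := by
    intro p
    rw [← MvPolynomial.sum_homogeneousComponent p, map_sum, map_sum, sum_inner]
    refine Finset.sum_eq_zero fun i _ => ?_
    rcases Nat.eq_zero_or_pos i with rfl | hi
    · rw [MvPolynomial.homogeneousComponent_zero, ← mul_one (MvPolynomial.C _),
        MvPolynomial.C_mul', map_smul, map_smul, inner_smul_left, h0, mul_zero]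
    · exact tri i 0 _ _ (MvPolynomial.homogeneousComponent_isHomogeneous i p)
        (MvPolynomial.isHomogeneous_one _ _) hi
  have hz : (fun v : H₁ => ⟪X v, ι₂ 1⟫) = fun _ => 0 :=
    hdense₁.equalizer (by fun_prop) (by fun_prop) (funext hp0)
  have h1 := congrFun hz (X.symm (ι₂ 1))
  simp only [ContinuousLinearEquiv.apply_symm_apply, inner_self_eq_zero] at h1
  exact one_ne_zero (hinj₂ (h1.trans (map_zero ι₂).symm))
end
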